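/- Let Y_3 = {y_1, y_2, y_3} and Y_3′ = {y_1′, y_2′, y_3′} be two triples of non-collinear points in ℝ², let r ∈ [1,∞) and n ≥ 2. Let ρ_n^{and}(r) := (2/(n(n−1))) Σ_{1≤i<j≤n} 1[X_j ∈ N_PE^r(X_i) and X_i ∈ N_PE^r(X_j)] and ρ_n^{or}(r) := (2/(n(n−1))) Σ_{1≤i<j≤n} 1[X_j ∈ N_PE^r(X_i) or X_i ∈ N_PE^r(X_j)], computed from X_1,…,X_n i.i.d. uniform on the triangle T(Y_3) with the proportional-edge construction based on Y_3. Then the probability distribution (law) of ρ_n^{and}(r) is the same as that of the corresponding statistic computed from X_1′,…,X_n′ i.i.d. uniform on T(Y_3′) with the construction based on Y_3′, and likewise for ρ_n^{or}(r); that is, the distributions of ρ_n^{and}(r) and ρ_n^{or}(r) do not depend on the geometry of the triangle. -/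

import Mathlib

/-! The affine map sending the vertices `(0,0), (1,0), (0,1)` to `y 0, y 1, y 2` (`chart y`) is a
bijection when the triangle is nondegenerate. It preserves convex hulls, midpoints, the center of
mass and barycentric coordinates, so it carries the proximity regions of the reference triangle to
those of `y` (`chart_mem_NPE`). It multiplies Lebesgue measure by a constant, so it carries the
uniform distribution on the reference triangle to the one on `y` (`measurePreserving_chart`).
Applied to each sample point, it shows that each density has the same law as on the reference
triangle (`map_eq_of_chart`); this is used for both `y` and `y'`. -/

open MeasureTheory ProbabilityTheory Filter Topology
open scoped Classical

noncomputable section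

/-- The planar cross product / determinant of two vectors in `ℝ²`. -/
def det2 (u v : ℝ × ℝ) : ℝ := u.1 * v.2 - u.2 * v.1

/-- The triangle (closed convex hull) spanned by three points of `ℝ²`. -/
def triangle (y : Fin 3 → ℝ × ℝ) : Set (ℝ × ℝ) := convexHull ℝ {y 0, y 1, y 2}

/-- The barycentric coordinate with respect to the vertex `y i` of the triangle with
vertices `y 0, y 1, y 2` (so `bary y i (y i) = 1` and `bary y i` vanishes on the edge
opposite `y i`). -/
def bary (y : Fin 3 → ℝ × ℝ) (i : Fin 3) (z : ℝ × ℝ) : ℝ :=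
  det2 (z - y (i + 1)) (y (i + 2) - y (i + 1)) /
    det2 (y i - y (i + 1)) (y (i + 2) - y (i + 1))

/-- The vertex region `R(y i)`: the convex hull of `y i`, the midpoints of the two
edges incident to `y i`, and the center of mass of the triangle. -/
def vertexRegion (y : Fin 3 → ℝ × ℝ) (i : Fin 3) : Set (ℝ × ℝ) :=
  convexHull ℝ {y i, midpoint ℝ (y i) (y (i + 1)), midpoint ℝ (y i) (y (i + 2)),
    (3 : ℝ)⁻¹ • (y 0 + y 1 + y 2)}

/-- The vertex of smallest index whose vertex region contains `x`. -/
def vtx (y : Fin 3 → ℝ × ℝ) (x : ℝ × ℝ) : Fin 3 :=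
  if x ∈ vertexRegion y 0 then 0 else if x ∈ vertexRegion y 1 then 1 else 2

/-- The proportional-edge proximity region `N_PE^r(x)` in the triangle with vertices
`y 0, y 1, y 2`:  `{z ∈ T : 1 − b_{v(x)}(z) ≤ r (1 − b_{v(x)}(x))}` for non-vertex `x`,
and `{x}` for a vertex `x`. -/
def NPE (y : Fin 3 → ℝ × ℝ) (r : ℝ) (x : ℝ × ℝ) : Set (ℝ × ℝ) :=
  if x = y 0 ∨ x = y 1 ∨ x = y 2 then {x}
  else {z ∈ triangle y | 1 - bary y (vtx y x) z ≤ r * (1 - bary y (vtx y x) x)}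

/-- The uniform distribution on the triangle with vertices `y 0, y 1, y 2`. -/
def unif (y : Fin 3 → ℝ × ℝ) : Measure (ℝ × ℝ) :=
  (volume (triangle y))⁻¹ • volume.restrict (triangle y)


/-- The relative edge density of the reflexivity graph of the proportional-edge PCD,
as a function of the sample `x : Fin n → ℝ × ℝ`. -/
def rhoAnd (y : Fin 3 → ℝ × ℝ) (r : ℝ) (n : ℕ) (x : Fin n → ℝ × ℝ) : ℝ :=
  (2 / ((n : ℝ) * ((n : ℝ) - 1))) * ∑ i : Fin n, ∑ j : Fin n,
    (if i < j ∧ x j ∈ NPE y r (x i) ∧ x i ∈ NPE y r (x j) then (1 : ℝ) else 0)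

/-- The relative edge density of the underlying graph of the proportional-edge PCD,
as a function of the sample `x : Fin n → ℝ × ℝ`. -/
def rhoOr (y : Fin 3 → ℝ × ℝ) (r : ℝ) (n : ℕ) (x : Fin n → ℝ × ℝ) : ℝ :=
  (2 / ((n : ℝ) * ((n : ℝ) - 1))) * ∑ i : Fin n, ∑ j : Fin n,
    (if i < j ∧ (x j ∈ NPE y r (x i) ∨ x i ∈ NPE y r (x j)) then (1 : ℝ) else 0)

/-! ### Affine charts of a triangle -/

/-- The vertices `(0,0), (1,0), (0,1)` of the reference triangle. -/
def refTri : Fin 3 → ℝ × ℝ := ![(0, 0), (1, 0), (0, 1)]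

/-- The linear part of the affine map carrying the reference triangle onto the triangle `y`. -/
def chartLin (y : Fin 3 → ℝ × ℝ) : (ℝ × ℝ) →ₗ[ℝ] (ℝ × ℝ) :=
  (LinearMap.fst ℝ ℝ ℝ).smulRight (y 1 - y 0) + (LinearMap.snd ℝ ℝ ℝ).smulRight (y 2 - y 0)

/-- The affine map sending the vertices of the reference triangle to `y 0, y 1, y 2`. -/
def chart (y : Fin 3 → ℝ × ℝ) : (ℝ × ℝ) →ᵃ[ℝ] (ℝ × ℝ) :=
  (chartLin y).toAffineMap + AffineMap.const ℝ _ (y 0)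

lemma chartLin_apply (y : Fin 3 → ℝ × ℝ) (p : ℝ × ℝ) :
    chartLin y p = p.1 • (y 1 - y 0) + p.2 • (y 2 - y 0) := rfl

lemma chart_eq (y : Fin 3 → ℝ × ℝ) (p : ℝ × ℝ) : chart y p = chartLin y p + y 0 := rfl

lemma chart_refTri (y : Fin 3 → ℝ × ℝ) (i : Fin 3) : chart y (refTri i) = y i := by
  fin_cases i <;> simp [chart_eq, chartLin_apply, refTri]

lemma det2_ne_zero (y : Fin 3 → ℝ × ℝ)
    (hy : ¬ Collinear ℝ ({y 0, y 1, y 2} : Set (ℝ × ℝ))) :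
    det2 (y 1 - y 0) (y 2 - y 0) ≠ 0 := by
  intro h
  apply hy
  rw [collinear_iff_of_mem (p₀ := y 0) (by simp)]
  simp only [det2, Prod.fst_sub, Prod.snd_sub] at h
  by_cases ha : (y 1).1 - (y 0).1 = 0
  · by_cases hb : (y 1).2 - (y 0).2 = 0
    · refine ⟨y 2 - y 0, ?_⟩
      have h10 : y 1 = y 0 := Prod.ext (sub_eq_zero.mp ha) (sub_eq_zero.mp hb)
      simp only [Set.mem_insert_iff, Set.mem_singleton_iff, forall_eq_or_imp, forall_eq]
      exact ⟨⟨0, by simp⟩, ⟨0, by simp [h10]⟩, ⟨1, by simp⟩⟩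
    · refine ⟨y 1 - y 0, ?_⟩
      simp only [Set.mem_insert_iff, Set.mem_singleton_iff, forall_eq_or_imp, forall_eq]
      refine ⟨⟨0, by simp⟩, ⟨1, by simp⟩,
        ⟨((y 2).2 - (y 0).2) / ((y 1).2 - (y 0).2), ?_⟩⟩
      ext
      · simp only [vadd_eq_add, Prod.fst_add, Prod.smul_fst, Prod.fst_sub, smul_eq_mul]
        field_simp
        linarith
      · simp only [vadd_eq_add, Prod.snd_add, Prod.smul_snd, Prod.snd_sub, smul_eq_mul]
        field_simp
        ring
  · refine ⟨y 1 - y 0, ?_⟩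
    simp only [Set.mem_insert_iff, Set.mem_singleton_iff, forall_eq_or_imp, forall_eq]
    refine ⟨⟨0, by simp⟩, ⟨1, by simp⟩,
      ⟨((y 2).1 - (y 0).1) / ((y 1).1 - (y 0).1), ?_⟩⟩
    ext
    · simp only [vadd_eq_add, Prod.fst_add, Prod.smul_fst, Prod.fst_sub, smul_eq_mul]
      field_simp
      ring
    · simp only [vadd_eq_add, Prod.snd_add, Prod.smul_snd, Prod.snd_sub, smul_eq_mul]
      field_simp
      linarith

lemma chartLin_injective (y : Fin 3 → ℝ × ℝ)
    (hd : det2 (y 1 - y 0) (y 2 - y 0) ≠ 0) : Function.Injective (chartLin y) := by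
  rw [← LinearMap.ker_eq_bot, LinearMap.ker_eq_bot']
  intro p hp
  rw [chartLin_apply, Prod.ext_iff] at hp
  obtain ⟨h1, h2⟩ := hp
  simp only [Prod.fst_add, Prod.smul_fst, Prod.snd_add, Prod.smul_snd, smul_eq_mul,
    Prod.fst_zero, Prod.snd_zero] at h1 h2
  -- Cramer rule
  have e1 : p.1 * det2 (y 1 - y 0) (y 2 - y 0) = 0 := by
    unfold det2
    linear_combination (y 2 - y 0).2 * h1 - (y 2 - y 0).1 * h2
  have e2 : p.2 * det2 (y 1 - y 0) (y 2 - y 0) = 0 := by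
    unfold det2
    linear_combination (y 1 - y 0).1 * h2 - (y 1 - y 0).2 * h1
  exact Prod.ext ((mul_eq_zero.mp e1).resolve_right hd) ((mul_eq_zero.mp e2).resolve_right hd)

/-- The chart of a nondegenerate triangle as a measurable automorphism of the plane. -/
def chartEquiv (y : Fin 3 → ℝ × ℝ) (hd : det2 (y 1 - y 0) (y 2 - y 0) ≠ 0) :
    (ℝ × ℝ) ≃ᵐ (ℝ × ℝ) :=
  ((LinearEquiv.ofInjectiveEndo (chartLin y)
    (chartLin_injective y hd)).toContinuousLinearEquiv.toHomeomorph.trans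
      (Homeomorph.addRight (y 0))).toMeasurableEquiv

lemma coe_chartEquiv (y : Fin 3 → ℝ × ℝ) (hd : det2 (y 1 - y 0) (y 2 - y 0) ≠ 0) :
    ⇑(chartEquiv y hd) = chart y := rfl

lemma chart_injective (y : Fin 3 → ℝ × ℝ) (hd : det2 (y 1 - y 0) (y 2 - y 0) ≠ 0) :
    Function.Injective (chart y) :=
  coe_chartEquiv y hd ▸ (chartEquiv y hd).injective

/-! ### Affine invariance of the proximity regions -/

lemma chart_mem_triangle (y : Fin 3 → ℝ × ℝ) (hd : det2 (y 1 - y 0) (y 2 - y 0) ≠ 0)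
    (z : ℝ × ℝ) : chart y z ∈ triangle y ↔ z ∈ triangle refTri := by
  have h : triangle y = chart y '' triangle refTri := by
    simp only [triangle, AffineMap.image_convexHull, Set.image_insert_eq, Set.image_singleton,
      chart_refTri]
  rw [h, (chart_injective y hd).mem_set_image]

lemma chart_centroid (y : Fin 3 → ℝ × ℝ) :
    chart y ((3 : ℝ)⁻¹ • (refTri 0 + refTri 1 + refTri 2)) =
      (3 : ℝ)⁻¹ • (y 0 + y 1 + y 2) := by
  ext <;> simp [chart_eq, chartLin_apply, refTri] <;> ring

lemma chart_mem_vertexRegion (y : Fin 3 → ℝ × ℝ) (hd : det2 (y 1 - y 0) (y 2 - y 0) ≠ 0)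
    (i : Fin 3) (z : ℝ × ℝ) :
    chart y z ∈ vertexRegion y i ↔ z ∈ vertexRegion refTri i := by
  have h : vertexRegion y i = chart y '' vertexRegion refTri i := by
    simp only [vertexRegion, AffineMap.image_convexHull, Set.image_insert_eq,
      Set.image_singleton, chart_refTri, AffineMap.map_midpoint, chart_centroid]
  rw [h, (chart_injective y hd).mem_set_image]

lemma vtx_chart (y : Fin 3 → ℝ × ℝ) (hd : det2 (y 1 - y 0) (y 2 - y 0) ≠ 0) (x : ℝ × ℝ) :
    vtx y (chart y x) = vtx refTri x := by
  simp only [vtx, chart_mem_vertexRegion y hd]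

/-- An affine map multiplies every `det2` of differences by the determinant of its linear part. -/
lemma det2_chart_sub (y : Fin 3 → ℝ × ℝ) (a b c d : ℝ × ℝ) :
    det2 (chart y a - chart y b) (chart y c - chart y d) =
      det2 (y 1 - y 0) (y 2 - y 0) * det2 (a - b) (c - d) := by
  simp only [det2, chart_eq, chartLin_apply, Prod.fst_sub, Prod.snd_sub, Prod.fst_add,
    Prod.snd_add, Prod.smul_fst, Prod.smul_snd, smul_eq_mul]
  ring

lemma bary_chart (y : Fin 3 → ℝ × ℝ) (hd : det2 (y 1 - y 0) (y 2 - y 0) ≠ 0)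
    (i : Fin 3) (z : ℝ × ℝ) : bary y i (chart y z) = bary refTri i z := by
  unfold bary
  rw [← chart_refTri y i, ← chart_refTri y (i + 1), ← chart_refTri y (i + 2),
    det2_chart_sub, det2_chart_sub, mul_div_mul_left _ _ hd]

lemma chart_mem_NPE (y : Fin 3 → ℝ × ℝ) (hd : det2 (y 1 - y 0) (y 2 - y 0) ≠ 0)
    (r : ℝ) (x z : ℝ × ℝ) : chart y z ∈ NPE y r (chart y x) ↔ z ∈ NPE refTri r x := by
  have hv (i : Fin 3) : chart y x = y i ↔ x = refTri i := by
    rw [← chart_refTri y i, (chart_injective y hd).eq_iff]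
  unfold NPE
  simp only [hv]
  split_ifs
  · simp [(chart_injective y hd).eq_iff]
  · simp only [Set.mem_ofPred_eq, chart_mem_triangle y hd, vtx_chart y hd, bary_chart y hd]

/-! ### Transport of the uniform distribution -/

instance (y : Fin 3 → ℝ × ℝ) : IsFiniteMeasure (unif y) :=
  ⟨by
    simp only [unif, Measure.smul_apply, Measure.restrict_apply_univ, smul_eq_mul]
    exact (ENNReal.inv_mul_le_one _).trans_lt ENNReal.one_lt_top⟩

/-- The chart scales Lebesgue measure by a constant, which normalization cancels. -/
lemma measurePreserving_chart (y : Fin 3 → ℝ × ℝ)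
    (hd : det2 (y 1 - y 0) (y 2 - y 0) ≠ 0) :
    MeasurePreserving (chartEquiv y hd) (unif refTri) (unif y) := by
  refine ⟨(chartEquiv y hd).measurable, ?_⟩
  have hdet : LinearMap.det (chartLin y) ≠ 0 :=
    (LinearEquiv.isUnit_det' (LinearEquiv.ofInjectiveEndo _ (chartLin_injective y hd))).ne_zero
  obtain ⟨c, hc0, hct, hc⟩ : ∃ c : ENNReal, c ≠ 0 ∧ c ≠ ⊤ ∧
      Measure.map (chartEquiv y hd) volume = c • volume := by
    refine ⟨ENNReal.ofReal |(LinearMap.det (chartLin y))⁻¹|, ?_, ENNReal.ofReal_ne_top, ?_⟩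
    · simpa using hdet
    · have hcomp : ⇑(chartEquiv y hd) = (fun p => p + y 0) ∘ chartLin y := rfl
      rw [hcomp, ← Measure.map_map (measurable_add_const _)
        (chartLin y).continuous_of_finiteDimensional.measurable,
        Measure.map_linearMap_addHaar_eq_smul_addHaar _ hdet, Measure.map_smul,
        map_add_right_eq_self]
  have hpre : chartEquiv y hd ⁻¹' triangle y = triangle refTri := by
    ext z
    rw [Set.mem_preimage, coe_chartEquiv, chart_mem_triangle y hd]
  have hvol : volume (triangle refTri) = c * volume (triangle y) := by
    rw [← hpre, ← MeasurableEquiv.map_apply, hc, Measure.smul_apply, smul_eq_mul]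
  have hres : Measure.map (chartEquiv y hd) (volume.restrict (triangle refTri)) =
      c • volume.restrict (triangle y) := by
    rw [← hpre, ← MeasurableEquiv.restrict_map, hc, Measure.restrict_smul]
  rw [unif, Measure.map_smul, hres, hvol, smul_smul,
    ENNReal.mul_inv (Or.inl hc0) (Or.inl hct), mul_right_comm,
    ENNReal.inv_mul_cancel hc0 hct, one_mul, unif]

/-- If `f` on samples from `y` corresponds to `g` on samples from the reference triangle under the
chart, then `f` and `g` have the same law. Since the chart is a measurable isomorphism, no measurability of
`f` is needed. -/
lemma map_eq_of_chart (y : Fin 3 → ℝ × ℝ) (hd : det2 (y 1 - y 0) (y 2 - y 0) ≠ 0)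
    {n : ℕ} (f g : (Fin n → ℝ × ℝ) → ℝ) (hfg : ∀ x, f (fun i => chart y (x i)) = g x) :
    Measure.map f (Measure.pi fun _ : Fin n => unif y) =
      Measure.map g (Measure.pi fun _ : Fin n => unif refTri) := by
  let Φ : (Fin n → ℝ × ℝ) ≃ᵐ (Fin n → ℝ × ℝ) :=
    MeasurableEquiv.piCongrRight fun _ => chartEquiv y hd
  have hΦ : Measure.map Φ (Measure.pi fun _ : Fin n => unif refTri) =
      Measure.pi fun _ : Fin n => unif y :=
    (measurePreserving_pi (fun _ : Fin n => unif refTri) (fun _ : Fin n => unif y)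
      fun _ => measurePreserving_chart y hd).map_eq
  have hg : g = f ∘ Φ := funext fun x => (hfg x).symm
  rw [← hΦ, hg]
  by_cases hf : AEMeasurable f (Measure.map Φ (Measure.pi fun _ : Fin n => unif refTri))
  · exact AEMeasurable.map_map_of_aemeasurable hf Φ.measurable.aemeasurable
  -- otherwise both sides are the junk value `0`
  · rw [Measure.map_of_not_aemeasurable hf, Measure.map_of_not_aemeasurable]
    rwa [← Φ.measurableEmbedding.aemeasurable_map_iff]

/-- Geometry invariance: for i.i.d. uniform data on a triangle, the
distributions of the relative edge densities `ρ_n^and(r)` and `ρ_n^or(r)` of the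
reflexivity and underlying graphs of the proportional-edge PCD do not depend on the
geometry of the triangle. -/
theorem geometry_invariance
    (y y' : Fin 3 → ℝ × ℝ)
    (hy : ¬ Collinear ℝ ({y 0, y 1, y 2} : Set (ℝ × ℝ)))
    (hy' : ¬ Collinear ℝ ({y' 0, y' 1, y' 2} : Set (ℝ × ℝ)))
    (r : ℝ) (hr : 1 ≤ r) (n : ℕ) (hn : 2 ≤ n) :
    Measure.map (rhoAnd y r n) (Measure.pi fun _ : Fin n => unif y)
      = Measure.map (rhoAnd y' r n) (Measure.pi fun _ : Fin n => unif y') ∧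
    Measure.map (rhoOr y r n) (Measure.pi fun _ : Fin n => unif y)
      = Measure.map (rhoOr y' r n) (Measure.pi fun _ : Fin n => unif y') := by
  have hd := det2_ne_zero y hy
  have hd' := det2_ne_zero y' hy'
  constructor
  · rw [map_eq_of_chart y hd _ (rhoAnd refTri r n)
        fun x => by simp only [rhoAnd, chart_mem_NPE y hd],
      map_eq_of_chart y' hd' _ (rhoAnd refTri r n)
        fun x => by simp only [rhoAnd, chart_mem_NPE y' hd']]
  · rw [map_eq_of_chart y hd _ (rhoOr refTri r n)
        fun x => by simp only [rhoOr, chart_mem_NPE y hd],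
      map_eq_of_chart y' hd' _ (rhoOr refTri r n)
        fun x => by simp only [rhoOr, chart_mem_NPE y' hd']]

end
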